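/- Let 1 ≤ q ≤ m be integers and γ ∈ ℝ. Let Z*_1,…,Z*_m be independent standard GP(γ) random variables with descending order statistics Z*_{m:m} ≥ … ≥ Z*_{1:m}. Then the vector of top-q order statistics satisfies the distributional identity ((Z*_{m−i+1:m})_{i=1}^{q}) =_d ((Z*_{m−q+1:m} + (1 + γ Z*_{m−q+1:m}) Z_{q−i:q−1})_{i=1}^{q}), where Z_1,…,Z_{q−1} is another independent standard GP(γ) random sample, independent of Z*_1,…,Z*_m, and Z_{0:q−1} := 0. -/

import Mathlib

open MeasureTheory ProbabilityTheory Filter Real Set Topology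
open scoped ENNReal NNReal Classical

noncomputable section

/-- The `j`-th largest entry of the tuple `x` (`j = 0` gives the maximum, `j = 1` the
second largest, ...); `0` when `j` is out of range. -/
def descStat {m : ℕ} (x : Fin m → ℝ) (j : ℕ) : ℝ :=
  if h : j < m then (x ∘ Tuple.sort x) ⟨m - 1 - j, by omega⟩ else 0

/-- The kernel of degree `m` obtained from `K` by applying it to the top-`q`
(descending) order statistics: `K_m(x_1,…,x_m) = K(x_{m:m},…,x_{m−q+1:m})`. -/
def Km {q : ℕ} (K : (Fin q → ℝ) → ℝ) (m : ℕ) (x : Fin m → ℝ) : ℝ :=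
  K fun j => descStat x (j : ℕ)

/-- `K(a x_1 + b, …, a x_q + b) = K(x_1, …, x_q)` for all `a > 0`, `b ∈ ℝ`. -/
def LocScaleInvariant {q : ℕ} (K : (Fin q → ℝ) → ℝ) : Prop :=
  ∀ a b : ℝ, 0 < a → ∀ x : Fin q → ℝ, K (fun j => a * x j + b) = K x

/-- `h_γ(y) = (y^γ - 1)/γ`, interpreted as `log y` when `γ = 0`. -/
def hGamma (γ : ℝ) (y : ℝ) : ℝ := if γ = 0 then Real.log y else (y ^ γ - 1) / γ

lemma measurable_hGamma (γ : ℝ) : Measurable (hGamma γ) := by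
  unfold hGamma
  split_ifs
  · exact Real.measurable_log
  · fun_prop

/-- The uniform distribution on `(0,1)`. -/
def unif01 : Measure ℝ := volume.restrict (Set.Ioo (0:ℝ) 1)

instance : IsProbabilityMeasure unif01 := ⟨by simp [unif01]⟩

/-- The standard Pareto(1) distribution, with cdf `1 - 1/y` for `y ≥ 1`. -/
def pareto1 : Measure ℝ := ProbabilityTheory.paretoMeasure 1 1

instance : IsProbabilityMeasure pareto1 :=
  ProbabilityTheory.isProbabilityMeasure_paretoMeasure one_pos one_pos

/-- The standard generalized Pareto distribution `GP(γ)`: the law of `h_γ(Y)` for `Y`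
standard Pareto(1). -/
def gpMeasure (γ : ℝ) : Measure ℝ := pareto1.map (hGamma γ)

instance (γ : ℝ) : IsProbabilityMeasure (gpMeasure γ) :=
  Measure.isProbabilityMeasure_map (measurable_hGamma γ).aemeasurable

/-- The unit exponential distribution: the law of `-log U` for `U` uniform on `(0,1)`. -/
def expMeasure1 : Measure ℝ := unif01.map fun u => -Real.log u

instance : IsProbabilityMeasure expMeasure1 :=
  Measure.isProbabilityMeasure_map Real.measurable_log.neg.aemeasurable

/-- The Erlang(q) distribution: the law of the sum of `q` independent unit exponentials. -/
def erlangMeasure (q : ℕ) : Measure ℝ :=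
  (Measure.pi fun _ : Fin q => expMeasure1).map fun e => ∑ i, e i

instance (q : ℕ) : IsProbabilityMeasure (erlangMeasure q) :=
  Measure.isProbabilityMeasure_map
    (Finset.measurable_sum _ fun i _ => measurable_pi_apply i).aemeasurable

/-- The joint law of `r` iid `GP(γ)` random variables. -/
def gpPi (γ : ℝ) (r : ℕ) : Measure (Fin r → ℝ) := Measure.pi fun _ => gpMeasure γ

instance (γ : ℝ) (r : ℕ) : IsProbabilityMeasure (gpPi γ r) := by
  unfold gpPi; infer_instance

/-- The vector `(Z_{q-j:q-1})_{j=1}^{q}`: the descending order statistics of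
`z_1,…,z_{q-1}` with an extra last entry `Z_{0:q-1} := 0`. -/
def refVec {q : ℕ} (z : Fin (q-1) → ℝ) : Fin q → ℝ := fun j => descStat z (j : ℕ)

/-- `θ = E[K((Z_{q-j:q-1})_{j=1}^{q})]` for iid `GP(γ)` variables `Z_1,…,Z_{q-1}`. -/
def thetaK (γ : ℝ) {q : ℕ} (K : (Fin q → ℝ) → ℝ) : ℝ :=
  ∫ z, K (refVec z) ∂(gpPi γ (q-1))

/-- all moments of `K((Z_{q-j:q-1})_{j=1}^{q})` are finite. -/
def MomentCond (γ : ℝ) {q : ℕ} (K : (Fin q → ℝ) → ℝ) : Prop :=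
  ∀ p : ℝ, 0 < p →
    ∫⁻ z, ENNReal.ofReal (|K (refVec z)| ^ p) ∂(gpPi γ (q-1)) < ⊤

/-- The asymptotic variance
`σ²_K(γ) = ∫_0^∞ (E[K̄_{q+1}((Z_{q-j:q-1})_{j=1}^q, h_γ(S_q/x))])² dx`. -/
def sigmaSqK (γ : ℝ) {q : ℕ} (K : (Fin q → ℝ) → ℝ) : ℝ :=
  ∫ x in Set.Ioi (0:ℝ),
    (∫ zs : (Fin (q-1) → ℝ) × ℝ,
        (Km K (q+1) (Fin.snoc (refVec zs.1) (hGamma γ (zs.2 / x))) - thetaK γ K)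
      ∂((gpPi γ (q-1)).prod (erlangMeasure q))) ^ 2

/-- The U-statistic with kernel `K_m` evaluated on the sample `z`. -/
def UStat {q : ℕ} (K : (Fin q → ℝ) → ℝ) (m n : ℕ) (z : Fin n → ℝ) : ℝ :=
  ((n.choose m : ℝ))⁻¹ *
    ∑ I ∈ Finset.powersetCard m (Finset.univ : Finset (Fin n)),
      Km K I.card fun j => z (I.orderIsoOfFin rfl j).1

/-- Condition on the degree sequence: `m = o(n^{1-ε})` and `log n = o(m^{1-δ})`. -/
def DegreeCond (m : ℕ → ℕ) : Prop :=
  ∃ ε > (0:ℝ), ∃ δ > (0:ℝ),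
    Tendsto (fun n => (m n : ℝ) / (n : ℝ) ^ (1 - ε)) atTop (𝓝 0) ∧
    Tendsto (fun n : ℕ => Real.log n / (m n : ℝ) ^ (1 - δ)) atTop (𝓝 0)

/-- `ζ_{m,ℓ} = cov(K_m(Z_S), K_m(Z_{S'}))` for the blocks `S = [1:m]`,
`S' = [(m-ℓ+1):(2m-ℓ)]` (zero-indexed here), which overlap in `ℓ` indices. -/
def zetaCov {Ω : Type*} [MeasurableSpace Ω] (P : Measure Ω) {q : ℕ}
    (K : (Fin q → ℝ) → ℝ) (Z : ℕ → Ω → ℝ) (m ℓ : ℕ) : ℝ :=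
  (∫ ω, Km K m (fun i : Fin m => Z i ω) * Km K m (fun i : Fin m => Z (m - ℓ + i) ω) ∂P)
    - (∫ ω, Km K m (fun i : Fin m => Z i ω) ∂P)
      * (∫ ω, Km K m (fun i : Fin m => Z (m - ℓ + i) ω) ∂P)

/-- Convergence in distribution to a Gaussian, expressed via pointwise convergence of
the cumulative distribution functions (the Gaussian cdf being continuous). -/
def TendstoGaussian {Ω : Type*} [MeasurableSpace Ω] (P : Measure Ω)
    (T : ℕ → Ω → ℝ) (μ : ℝ) (v : ℝ≥0) : Prop :=
  ∀ x : ℝ, Tendsto (fun n => (P {ω | T n ω ≤ x}).toReal) atTop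
    (𝓝 ((gaussianReal μ v (Set.Iic x)).toReal))

/-- Convergence in probability to the constant `c`. -/
def TendstoInProb {Ω : Type*} [MeasurableSpace Ω] (P : Measure Ω)
    (T : ℕ → Ω → ℝ) (c : ℝ) : Prop :=
  ∀ ε : ℝ, 0 < ε → Tendsto (fun n => (P {ω | ε ≤ |T n ω - c|}).toReal) atTop (𝓝 0)


lemma gpx_pareto_Ioi (a : ℝ) (ha : 1 ≤ a) : pareto1 (Ioi a) = ENNReal.ofReal a⁻¹ := by
  have h0 : 0 < a := by linarith
  rw [pareto1, paretoMeasure, withDensity_apply _ measurableSet_Ioi,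
    setLIntegral_congr_fun (g := fun x => ENNReal.ofReal (x ^ (-2 : ℝ))) measurableSet_Ioi,
    ← ofReal_integral_eq_lintegral_ofReal]
  · rw [integral_Ioi_rpow_of_lt (by norm_num) h0]
    norm_num [Real.rpow_neg_one]
  · exact integrableOn_Ioi_rpow_of_lt (by norm_num) h0
  · rw [EventuallyLE, ae_restrict_iff' measurableSet_Ioi]
    refine ae_of_all _ fun x hx => ?_
    have : 0 < x := h0.trans hx
    simp only [Pi.zero_apply]; positivity
  · intro x hx
    have : 1 ≤ x := ha.trans (le_of_lt hx)
    simp only [paretoPDF_of_le this]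
    norm_num

lemma gpx_pareto_ge : ∀ᵐ y ∂pareto1, 1 ≤ y := by
  have : pareto1 (Iio 1) = 0 := by
    rw [pareto1, paretoMeasure, withDensity_apply _ measurableSet_Iio]
    exact lintegral_paretoPDF_of_le le_rfl
  rw [ae_iff]
  convert this using 2
  ext x; simp

lemma gpx_pareto_Ioi' (a : ℝ) : pareto1 (Ioi a) = ENNReal.ofReal (max a 1)⁻¹ := by
  rw [← gpx_pareto_Ioi _ (le_max_right a 1)]
  rcases le_total 1 a with h | h
  · rw [max_eq_left h]
  · rw [max_eq_right h, gpx_pareto_Ioi 1 le_rfl, inv_one, ENNReal.ofReal_one]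
    have h1 : pareto1 (Ioi 1) = 1 := by simp [gpx_pareto_Ioi 1 le_rfl]
    refine le_antisymm prob_le_one ?_
    rw [← h1]
    exact measure_mono (Ioi_subset_Ioi h)

instance gpx_pareto_noAtoms : NullSingletonClass pareto1 := by
  unfold pareto1 paretoMeasure; infer_instance

lemma gpx_ext_Ioi (μ ν : Measure ℝ) [IsFiniteMeasure μ] [IsFiniteMeasure ν]
    (hu : μ univ = ν univ) (h : ∀ a, μ (Ioi a) = ν (Ioi a)) : μ = ν := by
  refine Measure.ext_of_Iic _ _ fun a => ?_
  rw [← compl_Ioi, measure_compl measurableSet_Ioi (measure_ne_top _ _),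
    measure_compl measurableSet_Ioi (measure_ne_top _ _), hu, h]

lemma gpx_pareto_restrict (y : ℝ) (hy : 1 ≤ y) :
    pareto1.restrict (Ioi y) = pareto1 (Ioi y) • pareto1.map (fun z => y * z) := by
  have hm : Measurable (fun z : ℝ => y * z) := by fun_prop
  have : IsProbabilityMeasure (pareto1.map (fun z => y * z)) :=
    Measure.isProbabilityMeasure_map hm.aemeasurable
  have : IsFiniteMeasure (pareto1 (Ioi y) • pareto1.map (fun z => y * z)) :=
    Measure.smul_finite _ (measure_ne_top _ _)
  have y0 : 0 < y := by linarith
  refine gpx_ext_Ioi _ _ (by simp) fun a => ?_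
  rw [Measure.restrict_apply measurableSet_Ioi, Measure.smul_apply,
    Measure.map_apply hm measurableSet_Ioi, Ioi_inter_Ioi]
  have : (fun z : ℝ => y * z) ⁻¹' Ioi a = Ioi (a / y) := by
    ext z; simp [div_lt_iff₀' y0]
  rw [this, gpx_pareto_Ioi', gpx_pareto_Ioi', gpx_pareto_Ioi', smul_eq_mul,
    ← ENNReal.ofReal_mul (by positivity), ← mul_inv, max_eq_left hy]
  congr 2
  rw [mul_max_of_nonneg _ _ y0.le, mul_div_cancel₀ _ y0.ne', mul_one]
  exact max_eq_left (hy.trans (le_max_right a y))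

lemma gpx_hGamma_strictMono (γ : ℝ) : StrictMonoOn (hGamma γ) (Ioi 0) := by
  intro x hx y hy hxy
  have hx : 0 < x := hx
  unfold hGamma
  split_ifs with h
  · exact Real.log_lt_log hx hxy
  · rcases lt_or_gt_of_ne h with h | h
    · rw [div_lt_div_right_of_neg h]
      have := Real.rpow_lt_rpow_of_neg hx hxy h
      linarith
    · rw [div_lt_div_iff_of_pos_right h]
      have := Real.rpow_lt_rpow hx.le hxy h
      linarith

lemma gpx_hGamma_pos (γ y : ℝ) (hy : 0 < y) : 0 < 1 + γ * hGamma γ y := by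
  unfold hGamma
  split_ifs with h
  · simp [h]
  · have := Real.rpow_pos_of_pos hy γ
    field_simp
    linarith

lemma gpx_hGamma_mul (γ y z : ℝ) (hy : 0 < y) (hz : 0 < z) :
    hGamma γ y + (1 + γ * hGamma γ y) * hGamma γ z = hGamma γ (y * z) := by
  unfold hGamma
  split_ifs with h
  · simp [h, Real.log_mul hy.ne' hz.ne']
  · rw [Real.mul_rpow hy.le hz.le]
    field_simp
    ring

lemma gpx_restrict (γ y : ℝ) (hy : 1 ≤ y) :
    (gpMeasure γ).restrict (Ioi (hGamma γ y)) =
      gpMeasure γ (Ioi (hGamma γ y)) •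
        (gpMeasure γ).map (fun z => hGamma γ y + (1 + γ * hGamma γ y) * z) := by
  have hm := measurable_hGamma γ
  have hpre : (hGamma γ ⁻¹' (Ioi (hGamma γ y)) : Set ℝ) =ᵐ[pareto1] Ioi y := by
    filter_upwards [gpx_pareto_ge] with z hz
    apply propext
    exact (gpx_hGamma_strictMono γ).lt_iff_lt (show (0:ℝ) < y by linarith)
      (show (0:ℝ) < z by linarith)
  have h1 : gpMeasure γ (Ioi (hGamma γ y)) = pareto1 (Ioi y) := by
    rw [gpMeasure, Measure.map_apply hm measurableSet_Ioi, measure_congr hpre]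
  rw [h1, gpMeasure, Measure.restrict_map hm measurableSet_Ioi, Measure.restrict_congr_set hpre,
    gpx_pareto_restrict y hy, Measure.map_smul, Measure.map_map hm (by fun_prop),
    Measure.map_map (by fun_prop) hm]
  congr 1
  refine Measure.map_congr ?_
  filter_upwards [gpx_pareto_ge] with z hz
  exact (gpx_hGamma_mul γ y z (by linarith) (by linarith)).symm

instance gpx_noAtoms (γ : ℝ) : NullSingletonClass (gpMeasure γ) := by
  refine ⟨fun t => ?_⟩
  rw [gpMeasure, Measure.map_apply (measurable_hGamma γ) (measurableSet_singleton t)]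
  have hs : (hGamma γ ⁻¹' {t} ∩ Ioi 0).Subsingleton := by
    intro a ha b hb
    exact (gpx_hGamma_strictMono γ).injOn ha.2 hb.2 (ha.1.trans hb.1.symm)
  refine measure_mono_null ?_ (measure_union_null (hs.measure_zero pareto1)
    (ae_iff.1 gpx_pareto_ge))
  intro a ha
  by_cases h : 0 < a
  · exact Or.inl ⟨ha, h⟩
  · right; simp only [mem_ofPred_eq]; linarith

/-- good points of the support -/
def gpxGood (γ t : ℝ) : Prop := 0 < 1 + γ * t ∧
    (gpMeasure γ).restrict (Ioi t) =
      gpMeasure γ (Ioi t) • (gpMeasure γ).map (fun z => t + (1 + γ * t) * z)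

lemma gpx_good_ae (γ : ℝ) : ∀ᵐ t ∂(gpMeasure γ), gpxGood γ t := by
  have key : ∀ t : ℝ, 0 < 1 + γ * t → 0 ≤ t → gpxGood γ t := by
    intro t h1 h0
    refine ⟨h1, ?_⟩
    have : ∃ y, 1 ≤ y ∧ hGamma γ y = t := by
      by_cases h : γ = 0
      · exact ⟨Real.exp t, Real.one_le_exp h0, by simp [hGamma, h]⟩
      · refine ⟨(1 + γ * t) ^ (γ⁻¹), ?_, ?_⟩
        · rcases lt_or_gt_of_ne h with h | h
          · exact Real.one_le_rpow_of_pos_of_le_one_of_nonpos h1 (by nlinarith)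
              (inv_nonpos.2 h.le)
          · exact Real.one_le_rpow (by nlinarith) (inv_nonneg.2 h.le)
        · rw [hGamma, if_neg h, ← Real.rpow_mul h1.le, inv_mul_cancel₀ h, Real.rpow_one]
          field_simp
          ring
    obtain ⟨y, hy, rfl⟩ := this
    exact gpx_restrict γ y hy
  have h2 : ∀ᵐ t ∂(gpMeasure γ), 0 < 1 + γ * t ∧ 0 ≤ t := by
    rw [gpMeasure, ae_map_iff (measurable_hGamma γ).aemeasurable]
    · filter_upwards [gpx_pareto_ge] with y hy
      refine ⟨gpx_hGamma_pos γ y (by linarith), ?_⟩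
      have := (gpx_hGamma_strictMono γ).monotoneOn (show (0:ℝ) < 1 by norm_num)
        (show (0:ℝ) < y by linarith) hy
      simpa [hGamma] using this
    · exact (measurableSet_lt measurable_const (show Measurable fun t : ℝ => 1 + γ * t by fun_prop)).inter
        (measurableSet_le measurable_const measurable_id)
  filter_upwards [h2] with t ht
  exact key t ht.1 ht.2

lemma gpx_descStat_perm {m : ℕ} (x : Fin m → ℝ) (σ : Equiv.Perm (Fin m)) (j : ℕ) :
    descStat (x ∘ σ) j = descStat x j := by
  unfold descStat
  rw [Tuple.comp_perm_comp_sort_eq_comp_sort]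

lemma gpx_descStat_anti {m : ℕ} (x : Fin m → ℝ) (hx : StrictAnti x) (j : ℕ) (hj : j < m) :
    descStat x j = x ⟨j, hj⟩ := by
  unfold descStat
  have h : Monotone (x ∘ Fin.revPerm) := by
    intro a b hab
    exact hx.antitone (by simpa using hab)
  rw [dif_pos hj, ← Tuple.comp_sort_eq_comp_iff_monotone.2 h]
  simp only [Function.comp_apply, Fin.revPerm_apply]
  congr 1
  ext
  simp [Fin.rev]
  omega

lemma gpx_measurableSet_sort {m : ℕ} (σ : Equiv.Perm (Fin m)) :
    MeasurableSet {x : Fin m → ℝ | σ = Tuple.sort x} := by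
  simp only [Tuple.eq_sort_iff, Monotone, Function.comp_apply]
  measurability

lemma gpx_measurable_descStat {m : ℕ} (j : ℕ) :
    Measurable (fun x : Fin m → ℝ => descStat x j) := by
  unfold descStat
  by_cases h : j < m
  · simp only [dif_pos h, Function.comp_apply]
    have : (fun x : Fin m → ℝ => x (Tuple.sort x ⟨m - 1 - j, by omega⟩)) =
        fun x => ∑ σ : Equiv.Perm (Fin m),
          if σ = Tuple.sort x then x (σ ⟨m - 1 - j, by omega⟩) else 0 := by
      ext x
      simp
    rw [this]
    refine Finset.measurable_sum _ fun σ _ => ?_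
    exact Measurable.ite (gpx_measurableSet_sort σ) (measurable_pi_apply _) measurable_const
  · simp only [dif_neg h]; exact measurable_const

lemma gpx_measurableSet_SA {m : ℕ} : MeasurableSet {x : Fin m → ℝ | StrictAnti x} := by
  simp only [StrictAnti]
  measurability

lemma gpx_ae_inj (γ : ℝ) (n : ℕ) : ∀ᵐ x ∂(gpPi γ n), Function.Injective x := by
  have key : ∀ i j : Fin n, i ≠ j → ∀ᵐ x ∂(gpPi γ n), x i ≠ x j := by
    intro i j hij
    have hI : iIndepFun (fun (i : Fin n) (x : Fin n → ℝ) => x i) (gpPi γ n) :=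
      iIndepFun_pi (μ := fun _ : Fin n => gpMeasure γ) (X := fun _ x => x)
        (fun _ => aemeasurable_id)
    have h2 := hI.indepFun hij
    rw [indepFun_iff_map_prod_eq_prod_map_map (measurable_pi_apply i).aemeasurable
      (measurable_pi_apply j).aemeasurable] at h2
    have e : ∀ k, Measure.map (fun x : Fin n → ℝ => x k) (gpPi γ n) = gpMeasure γ := fun k =>
      (measurePreserving_eval (fun _ : Fin n => gpMeasure γ) k).map_eq
    rw [e, e] at h2
    have hd : MeasurableSet {p : ℝ × ℝ | p.1 = p.2} :=
      measurableSet_eq_fun measurable_fst measurable_snd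
    have h3 : ((gpMeasure γ).prod (gpMeasure γ)) {p : ℝ × ℝ | p.1 = p.2} = 0 := by
      rw [Measure.measure_prod_null hd]
      refine ae_of_all _ fun t => ?_
      have : (Prod.mk t ⁻¹' {p : ℝ × ℝ | p.1 = p.2}) = {t} := by
        ext s; simp [eq_comm]
      simp only [this]
      simp
    rw [← h2, Measure.map_apply (by fun_prop) hd] at h3
    rw [ae_iff]
    simpa using h3
  have : ∀ᵐ x ∂(gpPi γ n), ∀ i j : Fin n, i ≠ j → x i ≠ x j := by
    simp only [ae_all_iff]
    exact key
  filter_upwards [this] with x hx i j h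
  by_contra hne
  exact hx i j hne h

lemma gpx_count {n : ℕ} (x : Fin n → ℝ) (hx : Function.Injective x) :
    ∑ σ : Equiv.Perm (Fin n), (if StrictAnti (x ∘ σ) then (1 : ℝ≥0∞) else 0) = 1 := by
  have h0 : StrictAnti (x ∘ (Fin.revPerm.trans (Tuple.sort x) : Equiv.Perm (Fin n))) := by
    have : StrictMono (x ∘ Tuple.sort x) :=
      (Tuple.monotone_sort x).strictMono_of_injective (hx.comp (Tuple.sort x).injective)
    intro a b hab
    exact this (by simpa using hab)
  rw [Finset.sum_eq_single (Fin.revPerm.trans (Tuple.sort x) : Equiv.Perm (Fin n))]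
  · rw [if_pos h0]
  · intro τ _ hτ
    rw [if_neg]
    intro h
    apply hτ
    have := Tuple.unique_antitone h.antitone h0.antitone
    ext i
    have := hx (congrFun this i)
    rw [this]
  · simp

lemma gpx_mp_perm (γ : ℝ) (n : ℕ) (σ : Equiv.Perm (Fin n)) :
    MeasurePreserving (fun x : Fin n → ℝ => x ∘ σ) (gpPi γ n) (gpPi γ n) := by
  refine ⟨by fun_prop, ?_⟩
  unfold gpPi
  refine (Measure.pi_eq fun s hs => ?_).symm
  rw [Measure.map_apply (by fun_prop) (MeasurableSet.univ_pi hs)]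
  have : (fun x : Fin n → ℝ => x ∘ σ) ⁻¹' (Set.univ.pi s) = Set.univ.pi (fun i => s (σ.symm i)) := by
    ext x
    simp only [mem_preimage, mem_univ_pi, Function.comp_apply]
    exact ⟨fun h i => by simpa using h (σ.symm i), fun h i => by simpa using h (σ i)⟩
  rw [this, Measure.pi_pi]
  exact Equiv.prod_comp σ.symm (fun i => gpMeasure γ (s i))

lemma gpx_symm (γ : ℝ) (n : ℕ) (F : (Fin n → ℝ) → ℝ≥0∞) (hF : Measurable F)
    (hs : ∀ (σ : Equiv.Perm (Fin n)) x, F (x ∘ σ) = F x) :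
    ∫⁻ x, F x ∂(gpPi γ n) =
      (Nat.factorial n : ℝ≥0∞) * ∫⁻ x, (if StrictAnti x then F x else 0) ∂(gpPi γ n) := by
  have hmeas : Measurable fun x : Fin n → ℝ => if StrictAnti x then F x else 0 :=
    Measurable.ite gpx_measurableSet_SA hF measurable_const
  calc ∫⁻ x, F x ∂(gpPi γ n)
      = ∫⁻ x, ∑ σ : Equiv.Perm (Fin n), (if StrictAnti (x ∘ σ) then F (x ∘ σ) else 0)
          ∂(gpPi γ n) := by
        refine lintegral_congr_ae ?_
        filter_upwards [gpx_ae_inj γ n] with x hx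
        have := gpx_count x hx
        calc F x = (∑ σ : Equiv.Perm (Fin n),
              (if StrictAnti (x ∘ σ) then (1 : ℝ≥0∞) else 0)) * F x := by rw [this, one_mul]
          _ = _ := by
            rw [Finset.sum_mul]
            refine Finset.sum_congr rfl fun σ _ => ?_
            rw [hs]; split_ifs <;> simp
    _ = ∑ σ : Equiv.Perm (Fin n), ∫⁻ x, (if StrictAnti (x ∘ σ) then F (x ∘ σ) else 0)
          ∂(gpPi γ n) := by
        refine lintegral_finsetSum _ fun σ _ => ?_
        exact hmeas.comp (gpx_mp_perm γ n σ).measurable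
    _ = ∑ σ : Equiv.Perm (Fin n), ∫⁻ x, (if StrictAnti x then F x else 0) ∂(gpPi γ n) := by
        refine Finset.sum_congr rfl fun σ _ => ?_
        exact (gpx_mp_perm γ n σ).lintegral_comp hmeas
    _ = _ := by
        rw [Finset.sum_const, Finset.card_univ, Fintype.card_perm, Fintype.card_fin, nsmul_eq_mul]

lemma gpx_pi_restrict (γ t : ℝ) (ht : gpxGood γ t) (p : ℕ) :
    (gpPi γ p).restrict (Set.univ.pi fun _ => Ioi t) =
      (gpMeasure γ (Ioi t)) ^ p • (gpPi γ p).map (fun z i => t + (1 + γ * t) * z i) := by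
  have hm : Measurable (fun z : ℝ => t + (1 + γ * t) * z) := by fun_prop
  have : IsProbabilityMeasure ((gpMeasure γ).map (fun z => t + (1 + γ * t) * z)) :=
    Measure.isProbabilityMeasure_map hm.aemeasurable
  unfold gpPi
  rw [Measure.restrict_pi_pi,
    Measure.pi_map_pi (μ := fun _ : Fin p => gpMeasure γ)
      (f := fun _ z => t + (1 + γ * t) * z) (fun _ => hm.aemeasurable)]
  refine Measure.pi_eq fun s hs => ?_
  rw [Measure.smul_apply, Measure.pi_pi, ht.2]
  simp [Finset.prod_mul_distrib]

lemma gpx_lintegral_restrict (γ t : ℝ) (ht : gpxGood γ t) (p : ℕ)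
    (h : (Fin p → ℝ) → ℝ≥0∞) (hh : Measurable h) :
    ∫⁻ u, (if ∀ i, t < u i then h u else 0) ∂(gpPi γ p) =
      (gpMeasure γ (Ioi t)) ^ p * ∫⁻ z, h (fun i => t + (1 + γ * t) * z i) ∂(gpPi γ p) := by
  have hs : MeasurableSet (Set.univ.pi fun _ : Fin p => Ioi t) :=
    MeasurableSet.univ_pi fun _ => measurableSet_Ioi
  have e : ∫⁻ u, (if ∀ i, t < u i then h u else 0) ∂(gpPi γ p) =
      ∫⁻ u in (Set.univ.pi fun _ : Fin p => Ioi t), h u ∂(gpPi γ p) := by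
    rw [← lintegral_indicator hs]
    refine lintegral_congr fun u => ?_
    simp [Set.indicator]
  rw [e, gpx_pi_restrict γ t ht, lintegral_smul_measure, lintegral_map hh (by fun_prop),
    smul_eq_mul]

/-- `(u, t)` as a vector -/
def gpxSnoc {p : ℕ} (u : Fin p → ℝ) (t : ℝ) : Fin (p + 1) → ℝ :=
  fun i => if h : (i : ℕ) < p then u ⟨i, h⟩ else t

lemma gpx_measurable_snoc {p : ℕ} (t : ℝ) : Measurable fun u : Fin p → ℝ => gpxSnoc u t := by
  refine measurable_pi_lambda _ fun i => ?_
  unfold gpxSnoc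
  split_ifs
  · exact measurable_pi_apply _
  · exact measurable_const

lemma gpx_inner (γ t : ℝ) (ht : gpxGood γ t) (p : ℕ)
    (f : (Fin (p + 1) → ℝ) → ℝ≥0∞) (hf : Measurable f) :
    ∫⁻ u : Fin p → ℝ, (if ∀ i, t < u i then (if StrictAnti u then f (gpxSnoc u t) else 0) else 0)
        ∂(gpPi γ p) =
    ∫⁻ u : Fin p → ℝ, (if ∀ i, t < u i then (if StrictAnti u then
        (∫⁻ z, f (fun i => t + (1 + γ * t) * descStat z (i : ℕ)) ∂(gpPi γ p)) else 0) else 0)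
        ∂(gpPi γ p) := by
  have hSA : ∀ z : Fin p → ℝ, StrictAnti (fun i => t + (1 + γ * t) * z i) ↔ StrictAnti z := by
    intro z
    have h1 := ht.1
    simp only [StrictAnti, add_lt_add_iff_left, mul_lt_mul_iff_right₀ h1]
  have hm1 : Measurable fun u : Fin p → ℝ => if StrictAnti u then f (gpxSnoc u t) else 0 :=
    Measurable.ite gpx_measurableSet_SA (hf.comp (gpx_measurable_snoc t)) measurable_const
  have hg : Measurable fun z : Fin p → ℝ =>
      (fun (i : Fin (p + 1)) => t + (1 + γ * t) * descStat z (i : ℕ)) :=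
    measurable_pi_lambda _ fun i => ((gpx_measurable_descStat _).const_mul _).const_add _
  set g := ∫⁻ z, f (fun i => t + (1 + γ * t) * descStat z (i : ℕ)) ∂(gpPi γ p) with hgdef
  have hm2 : Measurable fun u : Fin p → ℝ => if StrictAnti u then g else 0 :=
    Measurable.ite gpx_measurableSet_SA measurable_const measurable_const
  rw [gpx_lintegral_restrict γ t ht p _ hm1, gpx_lintegral_restrict γ t ht p _ hm2]
  congr 1
  simp only [hSA]
  have hone : (1 : ℝ≥0∞) = (Nat.factorial p : ℝ≥0∞) *
      ∫⁻ x : Fin p → ℝ, (if StrictAnti x then 1 else 0) ∂(gpPi γ p) := by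
    rw [← gpx_symm γ p (fun _ => 1) measurable_const (fun _ _ => rfl)]
    simp
  have hg2 : g = (Nat.factorial p : ℝ≥0∞) * ∫⁻ z : Fin p → ℝ, (if StrictAnti z then
      f (gpxSnoc (fun i => t + (1 + γ * t) * z i) t) else 0) ∂(gpPi γ p) := by
    refine (gpx_symm γ p _ (hf.comp hg)
      (fun σ x => by simp only [Function.comp_apply, gpx_descStat_perm])).trans ?_
    congr 1
    refine lintegral_congr fun z => ?_
    split_ifs with hz
    · simp only [Function.comp_apply]
      congr 1
      ext i
      unfold gpxSnoc
      split_ifs with hi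
      · rw [gpx_descStat_anti z hz _ hi]
      · simp [descStat, hi]
    · rfl
  have hr : ∫⁻ z : Fin p → ℝ, (if StrictAnti z then g else 0) ∂(gpPi γ p) =
      g * ∫⁻ x : Fin p → ℝ, (if StrictAnti x then 1 else 0) ∂(gpPi γ p) := by
    rw [← lintegral_const_mul _ (Measurable.ite gpx_measurableSet_SA measurable_const
      measurable_const)]
    refine lintegral_congr fun z => ?_
    split_ifs <;> simp
  rw [hr, hg2, mul_right_comm, ← hone, one_mul]

lemma gpx_mp_append (γ : ℝ) (a b : ℕ) :
    MeasurePreserving (fun z : (Fin a → ℝ) × (Fin b → ℝ) => (Fin.append z.1 z.2 : Fin (a + b) → ℝ))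
      ((gpPi γ a).prod (gpPi γ b)) (gpPi γ (a + b)) := by
  have h := (measurePreserving_piCongrLeft (fun _ : Fin (a + b) => gpMeasure γ)
    finSumFinEquiv).comp
    (measurePreserving_sumPiEquivProdPi_symm (X := fun _ : Fin a ⊕ Fin b => ℝ)
      (fun _ => gpMeasure γ))
  suffices e : (fun z : (Fin a → ℝ) × (Fin b → ℝ) => (Fin.append z.1 z.2 : Fin (a + b) → ℝ)) =
      (MeasurableEquiv.piCongrLeft (fun _ => ℝ) finSumFinEquiv) ∘
        (MeasurableEquiv.sumPiEquivProdPi fun _ : Fin a ⊕ Fin b => ℝ).symm by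
    rw [e]; exact h
  ext z i
  obtain ⟨i, rfl⟩ := finSumFinEquiv.surjective i
  simp only [Function.comp_apply, MeasurableEquiv.coe_piCongrLeft]
  rw [Equiv.piCongrLeft_apply_apply]
  rcases i with i | i
  · simp only [finSumFinEquiv_apply_left, Fin.append_left]; rfl
  · simp only [finSumFinEquiv_apply_right, Fin.append_right]; rfl

lemma gpx_SA_append {p r : ℕ} (u : Fin p → ℝ) (w : Fin (r + 1) → ℝ) :
    StrictAnti (Fin.append u w) ↔ StrictAnti w ∧ (∀ i, w 0 < u i) ∧ StrictAnti u := by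
  constructor
  · intro h
    refine ⟨fun i j hij => ?_, fun i => ?_, fun i j hij => ?_⟩
    · have := h (show Fin.natAdd p i < Fin.natAdd p j by simpa using hij)
      simpa using this
    · have := h (show Fin.castAdd (r + 1) i < Fin.natAdd p 0 by
        simp [Fin.lt_def])
      rwa [Fin.append_left, Fin.append_right] at this
    · have := h (show Fin.castAdd (r + 1) i < Fin.castAdd (r + 1) j from hij)
      simpa using this
  · rintro ⟨hw, h0, hu⟩ i j
    refine Fin.addCases (fun i => ?_) (fun i => ?_) i <;>
    refine Fin.addCases (fun j => ?_) (fun j => ?_) j <;> intro hij <;>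
    simp only [Fin.append_left, Fin.append_right]
    · exact hu hij
    · exact (hw.antitone (Fin.zero_le j)).trans_lt (h0 i)
    · simp [Fin.lt_def] at hij; omega
    · exact hw (by simpa using hij)

lemma gpx_core (γ : ℝ) (p r : ℕ) (f : (Fin (p + 1) → ℝ) → ℝ≥0∞) (hf : Measurable f) :
    ∫⁻ x, f (fun i => descStat x (i : ℕ)) ∂(gpPi γ (p + (r + 1))) =
    ∫⁻ x, (∫⁻ z, f (fun i => descStat x p + (1 + γ * descStat x p) * descStat z (i : ℕ))
      ∂(gpPi γ p)) ∂(gpPi γ (p + (r + 1))) := by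
  have hm1 : Measurable fun x : Fin (p + (r + 1)) → ℝ =>
      f (fun i : Fin (p + 1) => descStat x (i : ℕ)) :=
    hf.comp (measurable_pi_lambda _ fun i => gpx_measurable_descStat _)
  have hm2 : Measurable fun x : Fin (p + (r + 1)) → ℝ =>
      ∫⁻ z, f (fun i => descStat x p + (1 + γ * descStat x p) * descStat z (i : ℕ))
      ∂(gpPi γ p) := by
    refine Measurable.lintegral_prod_right' (f := fun xz : (Fin (p + (r + 1)) → ℝ) × (Fin p → ℝ) =>
      f (fun i => descStat xz.1 p + (1 + γ * descStat xz.1 p) * descStat xz.2 (i : ℕ))) ?_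
    refine hf.comp (measurable_pi_lambda _ fun i => ?_)
    have h1 := (gpx_measurable_descStat (m := p + (r + 1)) p).comp
      (show Measurable (Prod.fst : (Fin (p + (r + 1)) → ℝ) × (Fin p → ℝ) → _) from measurable_fst)
    have h2 := (gpx_measurable_descStat (m := p) (i : ℕ)).comp
      (show Measurable (Prod.snd : (Fin (p + (r + 1)) → ℝ) × (Fin p → ℝ) → _) from measurable_snd)
    exact h1.add (((h1.const_mul γ).const_add 1).mul h2)
  rw [gpx_symm γ _ _ hm1 (fun σ x => by simp only [gpx_descStat_perm]),
    gpx_symm γ _ _ hm2 (fun σ x => by simp only [gpx_descStat_perm])]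
  congr 1
  have hm1' : Measurable fun x : Fin (p + (r + 1)) → ℝ => if StrictAnti x then
      f (fun i : Fin (p + 1) => descStat x (i : ℕ)) else 0 :=
    Measurable.ite gpx_measurableSet_SA hm1 measurable_const
  have hm2' : Measurable fun x : Fin (p + (r + 1)) → ℝ => if StrictAnti x then
      ∫⁻ z, f (fun i => descStat x p + (1 + γ * descStat x p) * descStat z (i : ℕ)) ∂(gpPi γ p) else 0 :=
    Measurable.ite gpx_measurableSet_SA hm2 measurable_const
  have mp := gpx_mp_append γ p (r + 1)
  refine (mp.lintegral_comp hm1').symm.trans (Eq.trans ?_ (mp.lintegral_comp hm2'))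
  refine (lintegral_prod_symm' _ (hm1'.comp mp.measurable)).trans
    (Eq.trans ?_ (lintegral_prod_symm' _ (hm2'.comp mp.measurable)).symm)
  simp only [Function.comp_apply]
  have hgood : ∀ᵐ w ∂(gpPi γ (r + 1)), gpxGood γ (w 0) :=
    (measurePreserving_eval (fun _ : Fin (r + 1) => gpMeasure γ) 0).quasiMeasurePreserving.ae
      (gpx_good_ae γ)
  refine lintegral_congr_ae ?_
  filter_upwards [hgood] with w hw
  by_cases hSw : StrictAnti w
  · have key := gpx_inner γ (w 0) hw p f hf
    refine Eq.trans (lintegral_congr fun u => ?_) (key.trans (lintegral_congr fun u => ?_))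
    · simp only [gpx_SA_append, hSw, true_and]
      by_cases h1 : ∀ i, w 0 < u i
      · by_cases h2 : StrictAnti u
        · simp only [h1, h2, implies_true, and_self, if_true]
          congr 1
          ext i
          rw [gpx_descStat_anti _ ((gpx_SA_append u w).2 ⟨hSw, h1, h2⟩) i (by omega)]
          unfold gpxSnoc
          split_ifs with hi
          · exact Fin.append_left u w ⟨i, hi⟩
          · rw [← Fin.append_right u w 0]
            congr 1
            ext
            simp; omega
        · simp [h2]
      · simp [h1]
    · simp only [gpx_SA_append, hSw, true_and]
      by_cases h1 : ∀ i, w 0 < u i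
      · by_cases h2 : StrictAnti u
        · simp only [h1, h2, implies_true, and_self, if_true]
          have : descStat (Fin.append u w) p = w 0 := by
            rw [gpx_descStat_anti _ ((gpx_SA_append u w).2 ⟨hSw, h1, h2⟩) p (by omega),
              ← Fin.append_right u w 0]
            congr 1
          rw [this]
        · simp [h2]
      · simp [h1]
  · simp only [gpx_SA_append, hSw, false_and, if_false]

/-- Lemma: representation of the top-`q` order statistics of a GP sample.
For `1 ≤ q ≤ m` and independent standard `GP(γ)` random variables
`Z*_1,…,Z*_m, Z_1,…,Z_{q-1}` (all mutually independent),
`((Z*_{m-i+1:m})_{i=1}^q) =_d ((Z*_{m-q+1:m} + (1 + γ Z*_{m-q+1:m}) Z_{q-i:q-1})_{i=1}^q)`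
with `Z_{0:q-1} := 0`. -/
theorem gp_top_order_statistics_representation
    {Ω : Type*} [MeasurableSpace Ω] (P : Measure Ω) [IsProbabilityMeasure P]
    (γ : ℝ) (q m : ℕ) (hq : 1 ≤ q) (hqm : q ≤ m)
    (W : (Fin m ⊕ Fin (q - 1)) → Ω → ℝ)
    (hWmeas : ∀ i, Measurable (W i))
    (hIndep : iIndepFun W P)
    (hDist : ∀ i, Measure.map (W i) P = gpMeasure γ) :
    Measure.map
      (fun ω (i : Fin q) => descStat (fun a : Fin m => W (Sum.inl a) ω) (i : ℕ)) P
    = Measure.map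
      (fun ω (i : Fin q) =>
        descStat (fun a : Fin m => W (Sum.inl a) ω) (q - 1) +
          (1 + γ * descStat (fun a : Fin m => W (Sum.inl a) ω) (q - 1)) *
            descStat (fun a : Fin (q - 1) => W (Sum.inr a) ω) (i : ℕ)) P := by
  obtain ⟨p, rfl⟩ : ∃ p, q = p + 1 := ⟨q - 1, by omega⟩
  obtain ⟨r, rfl⟩ : ∃ r, m = p + (r + 1) := ⟨m - (p + 1), by omega⟩
  change Fin (p + (r + 1)) ⊕ Fin p → Ω → ℝ at W
  have hmp : MeasurePreserving
      (fun ω => ((fun a => W (Sum.inl a) ω, fun a => W (Sum.inr a) ω) :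
        (Fin (p + (r + 1)) → ℝ) × (Fin p → ℝ))) P
      ((gpPi γ (p + (r + 1))).prod (gpPi γ p)) := by
    have h1 : MeasurePreserving (fun ω i => W i ω) P (Measure.pi fun _ => gpMeasure γ) := by
      refine ⟨measurable_pi_lambda _ hWmeas, ?_⟩
      refine ((iIndepFun_iff_map_fun_eq_pi_map (fun i => (hWmeas i).aemeasurable)).1
        hIndep).trans ?_
      congr 1
      ext1 i
      exact hDist i
    exact (measurePreserving_sumPiEquivProdPi
      (X := fun _ : Fin (p + (r + 1)) ⊕ Fin p => ℝ) (fun _ => gpMeasure γ)).comp h1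
  have hA : Measurable fun xz : (Fin (p + (r + 1)) → ℝ) × (Fin p → ℝ) =>
      fun i : Fin (p + 1) => descStat xz.1 (i : ℕ) :=
    measurable_pi_lambda _ fun i => (gpx_measurable_descStat _).comp measurable_fst
  have hB : Measurable fun xz : (Fin (p + (r + 1)) → ℝ) × (Fin p → ℝ) =>
      fun i : Fin (p + 1) => descStat xz.1 p + (1 + γ * descStat xz.1 p) *
        descStat xz.2 (i : ℕ) := by
    refine measurable_pi_lambda _ fun i => ?_
    have h1 := (gpx_measurable_descStat (m := p + (r + 1)) p).comp
      (show Measurable (Prod.fst : (Fin (p + (r + 1)) → ℝ) × (Fin p → ℝ) → _) from measurable_fst)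
    have h2 := (gpx_measurable_descStat (m := p) (i : ℕ)).comp
      (show Measurable (Prod.snd : (Fin (p + (r + 1)) → ℝ) × (Fin p → ℝ) → _) from measurable_snd)
    exact h1.add (((h1.const_mul γ).const_add 1).mul h2)
  have eA := Measure.map_map (μ := P) hA hmp.measurable
  have eB := Measure.map_map (μ := P) hB hmp.measurable
  rw [hmp.map_eq] at eA eB
  refine eA.symm.trans (Eq.trans ?_ eB)
  refine Measure.ext_of_lintegral _ fun f hf => ?_
  rw [lintegral_map hf hA, lintegral_map hf hB]
  refine (lintegral_prod _ (hf.comp hA).aemeasurable).trans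
    (Eq.trans ?_ (lintegral_prod _ (hf.comp hB).aemeasurable).symm)
  simp only [Function.comp_apply, lintegral_const, measure_univ, mul_one]
  exact gpx_core γ p r f hf

end
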